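/- Let p, q, r be three distinct elements of V, and consider the three conditions: (1) 𝔛_{\{p,q,r\}} is strictly collapsible over {p} into 𝔛_{\{q,r\}} with respect to λ_{\{q\}}^{\{p,q,r\}} and λ_{\{r\}}^{\{p,q,r\}}; (2) strictly collapsible over {q} into 𝔛_{\{p,r\}} with respect to λ_{\{p\}}^{\{p,q,r\}} and λ_{\{r\}}^{\{p,q,r\}}; (3) strictly collapsible over {r} into 𝔛_{\{p,q\}} with respect to λ_{\{p\}}^{\{p,q,r\}} and λ_{\{q\}}^{\{p,q,r\}}. Then for any two distinct conditions among (1), (2), (3), their conjunction holds if and only if X_p, X_q, X_r are mutually independent, i.e., p_{\{p,q,r\}}(x) = p_{\{p\}}(x_p)·p_{\{q\}}(x_q)·p_{\{r\}}(x_r) for all x. -/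

import Mathlib

open Finset

variable {V : Type*} [Fintype V] [DecidableEq V]
variable {𝔛 : V → Type*} [∀ v, Fintype (𝔛 v)] [∀ v, DecidableEq (𝔛 v)]
  [∀ v, Nonempty (𝔛 v)]

/-- The marginal `p_A` of a distribution `p` on the full table, evaluated at the
`A`-coordinates of `x`. -/
noncomputable def margin (p : (∀ v, 𝔛 v) → ℝ) (A : Finset V) (x : ∀ v, 𝔛 v) : ℝ :=
  ∑ y ∈ Finset.univ.filter (fun y : ∀ v, 𝔛 v => ∀ v ∈ A, y v = x v), p y

/-- `ν_L^M(x_L) = (1/|𝔛_{M∖L}|) Σ_{j ∈ 𝔛_M : j_L = x_L} log p_M(j)`, written with sums over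
full configurations (for `L ⊆ M` the extra coordinates cancel against the normalization). -/
noncomputable def nu (p : (∀ v, 𝔛 v) → ℝ) (L M : Finset V) (x : ∀ v, 𝔛 v) : ℝ :=
  (∏ v ∈ Lᶜ, (Fintype.card (𝔛 v) : ℝ))⁻¹ *
    ∑ j ∈ Finset.univ.filter (fun j : ∀ v, 𝔛 v => ∀ v ∈ L, j v = x v),
      Real.log (margin p M j)

/-- The marginal log-linear parameter `λ_L^M(x_L) = Σ_{L' ⊆ L} (−1)^{|L∖L'|} ν_{L'}^M(x_{L'})`. -/
noncomputable def mll (p : (∀ v, 𝔛 v) → ℝ) (L M : Finset V) (x : ∀ v, 𝔛 v) : ℝ :=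
  ∑ L' ∈ L.powerset, (-1 : ℝ) ^ ((L \ L').card) * nu p L' M x

/-- `𝔛_N` is strictly collapsible over `N ∖ M'` into `𝔛_{M'}` with respect to `λ_L^N`:
`λ_L^{M'} = λ_L^N` and `λ_Z^N = 0` for every `Z ⊆ N` with `L ⊊ Z` meeting `N ∖ M'`. -/
def StrictlyCollapsible (p : (∀ v, 𝔛 v) → ℝ) (N M' L : Finset V) : Prop :=
  (∀ x : ∀ v, 𝔛 v, mll p L M' x = mll p L N x) ∧
  (∀ Z ⊆ N, L ⊂ Z → (Z ∩ (N \ M')).Nonempty → ∀ x : ∀ v, 𝔛 v, mll p Z N x = 0)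

/-- averaging operator -/
noncomputable def avgOp (L : Finset V) (g : (∀ v, 𝔛 v) → ℝ) (x : ∀ v, 𝔛 v) : ℝ :=
  (∏ v ∈ Lᶜ, (Fintype.card (𝔛 v) : ℝ))⁻¹ *
    ∑ j ∈ Finset.univ.filter (fun j : ∀ v, 𝔛 v => ∀ v ∈ L, j v = x v), g j

def tset (L : Finset V) (x : ∀ v, 𝔛 v) (v : V) : Finset (𝔛 v) :=
  if v ∈ L then {x v} else Finset.univ

theorem filter_eq_pi (L : Finset V) (x : ∀ v, 𝔛 v) :
    Finset.univ.filter (fun j : ∀ v, 𝔛 v => ∀ v ∈ L, j v = x v) =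
      Fintype.piFinset (tset L x) := by
  ext y
  simp only [mem_filter, mem_univ, true_and, Fintype.mem_piFinset, tset]
  refine forall_congr' fun v => ?_
  by_cases h : v ∈ L <;> simp [h]

theorem prod_tset (L : Finset V) (x : ∀ v, 𝔛 v) :
    ∏ v, ((tset L x v).card : ℝ) = ∏ v ∈ Lᶜ, (Fintype.card (𝔛 v) : ℝ) := by
  rw [← Finset.prod_mul_prod_compl L, Finset.prod_eq_one, one_mul]
  · refine Finset.prod_congr rfl fun v hv => ?_
    simp [tset, Finset.mem_compl.1 hv]
  · intro v hv
    simp [tset, hv]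

theorem prod_card_ne (L : Finset V) : ∏ v ∈ Lᶜ, (Fintype.card (𝔛 v) : ℝ) ≠ 0 := by
  refine Finset.prod_ne_zero_iff.2 fun v _ => ?_
  exact_mod_cast Fintype.card_ne_zero

theorem tset_card_ne (L : Finset V) (x : ∀ v, 𝔛 v) (v : V) : ((tset L x v).card : ℝ) ≠ 0 := by
  unfold tset
  split_ifs
  · simp
  · simp [Fintype.card_ne_zero]

theorem avgOp_const (L : Finset V) (g : (∀ v, 𝔛 v) → ℝ) (x : ∀ v, 𝔛 v)
    (hg : ∀ y, (∀ v ∈ L, y v = x v) → g y = g x) : avgOp L g x = g x := by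
  unfold avgOp
  rw [Finset.sum_congr rfl (g := fun _ => g x) (fun y hy => hg y (Finset.mem_filter.1 hy).2),
    filter_eq_pi, Finset.sum_const, Fintype.card_piFinset, nsmul_eq_mul, Nat.cast_prod, prod_tset,
    ← mul_assoc, inv_mul_cancel₀ (prod_card_ne L), one_mul]

theorem avgOp_coord (L : Finset V) (v : V) (g : 𝔛 v → ℝ) (x : ∀ v, 𝔛 v) :
    avgOp L (fun y => g (y v)) x = (∑ a ∈ tset L x v, g a) / (tset L x v).card := by
  unfold avgOp
  have key : ∑ y ∈ Fintype.piFinset (tset L x), g (y v) =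
      (∑ a ∈ tset L x v, g a) * ∏ w ∈ Finset.univ.erase v, ((tset L x w).card : ℝ) := by
    have h := Finset.prod_univ_sum (tset L x)
      (fun w (a : 𝔛 w) => if h : w = v then g (h ▸ a) else (1 : ℝ))
    have h2 : ∀ y : ∀ v, 𝔛 v, (∏ w, if h : w = v then g (h ▸ y w) else (1 : ℝ)) = g (y v) := by
      intro y
      rw [Finset.prod_eq_single v]
      · simp
      · intro b _ hb; simp [hb]
      · simp
    simp only [h2] at h
    rw [← h, ← Finset.mul_prod_erase _ _ (Finset.mem_univ v)]
    simp only [dite_true]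
    congr 1
    refine Finset.prod_congr rfl fun w hw => ?_
    simp [Finset.ne_of_mem_erase hw]
  rw [filter_eq_pi, key, ← prod_tset L x, ← Finset.mul_prod_erase _ _ (Finset.mem_univ v)]
  have h1 := tset_card_ne L x v
  have h3 : ∏ w ∈ Finset.univ.erase v, ((tset L x w).card : ℝ) ≠ 0 :=
    Finset.prod_ne_zero_iff.2 fun w _ => tset_card_ne L x w
  field_simp

theorem avgOp_sum (L : Finset V) (M : Finset V) (g : ∀ v, 𝔛 v → ℝ) (x : ∀ v, 𝔛 v) :
    avgOp L (fun y => ∑ v ∈ M, g v (y v)) x =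
      ∑ v ∈ M, if v ∈ L then g v (x v) else (∑ a, g v a) / Fintype.card (𝔛 v) := by
  have : avgOp L (fun y => ∑ v ∈ M, g v (y v)) x = ∑ v ∈ M, avgOp L (fun y => g v (y v)) x := by
    unfold avgOp
    rw [Finset.sum_comm, Finset.mul_sum]
  rw [this]
  refine Finset.sum_congr rfl fun v _ => ?_
  rw [avgOp_coord]
  by_cases h : v ∈ L <;> simp [tset, h]

theorem nu_eq (p : (∀ v, 𝔛 v) → ℝ) (L M : Finset V) (x : ∀ v, 𝔛 v) :
    nu p L M x = avgOp L (fun y => Real.log (margin p M y)) x := rfl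

theorem margin_congr (p : (∀ v, 𝔛 v) → ℝ) (A : Finset V) {x y : ∀ v, 𝔛 v}
    (h : ∀ v ∈ A, x v = y v) : margin p A x = margin p A y := by
  unfold margin
  refine Finset.sum_congr (Finset.filter_congr fun z _ => ?_) fun _ _ => rfl
  exact forall₂_congr fun v hv => by rw [h v hv]

theorem nu_congr (p : (∀ v, 𝔛 v) → ℝ) (L M : Finset V) {x y : ∀ v, 𝔛 v}
    (h : ∀ v ∈ L, x v = y v) : nu p L M x = nu p L M y := by
  unfold nu
  congr 1
  refine Finset.sum_congr (Finset.filter_congr fun z _ => ?_) fun _ _ => rfl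
  exact forall₂_congr fun v hv => by rw [h v hv]

theorem nu_self (p : (∀ v, 𝔛 v) → ℝ) (M : Finset V) (x : ∀ v, 𝔛 v) :
    nu p M M x = Real.log (margin p M x) := by
  rw [nu_eq, avgOp_const]
  intro y hy
  rw [margin_congr p M hy]

theorem margin_pos (p : (∀ v, 𝔛 v) → ℝ) (hp : ∀ x, 0 < p x) (A : Finset V) (x : ∀ v, 𝔛 v) :
    0 < margin p A x :=
  Finset.sum_pos (fun y _ => hp y) ⟨x, by simp⟩

theorem margin_empty (p : (∀ v, 𝔛 v) → ℝ) (hsum : ∑ x, p x = 1) (x : ∀ v, 𝔛 v) :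
    margin p ∅ x = 1 := by
  simp [margin, hsum]

theorem margin_insert (p : (∀ v, 𝔛 v) → ℝ) (a : V) (A : Finset V) (ha : a ∉ A) (x : ∀ v, 𝔛 v) :
    margin p A x = ∑ t : 𝔛 a, margin p (insert a A) (Function.update x a t) := by
  unfold margin
  rw [← Finset.sum_fiberwise _ (fun y : ∀ v, 𝔛 v => y a)]
  refine Finset.sum_congr rfl fun t _ => ?_
  rw [Finset.filter_filter]
  refine Finset.sum_congr (Finset.filter_congr fun z _ => ?_) fun _ _ => rfl
  rw [Finset.forall_mem_insert, Function.update_self, and_comm]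
  refine and_congr_right fun _ => forall₂_congr fun v hv => ?_
  rw [Function.update_of_ne (ne_of_mem_of_not_mem hv ha)]

theorem mll_one (p : (∀ v, 𝔛 v) → ℝ) (a : V) (M : Finset V) (x : ∀ v, 𝔛 v) :
    mll p {a} M x = nu p {a} M x - nu p ∅ M x := by
  have : ({a} : Finset V) = insert a ∅ := rfl
  unfold mll
  rw [this, Finset.sum_powerset_insert (by simp)]
  simp
  ring

theorem mll_two (p : (∀ v, 𝔛 v) → ℝ) (a b : V) (hab : a ≠ b) (M : Finset V) (x : ∀ v, 𝔛 v) :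
    mll p {a, b} M x = nu p {a, b} M x - nu p {a} M x - nu p {b} M x + nu p ∅ M x := by
  have hb : ({b} : Finset V) = insert b ∅ := rfl
  have e1 : ({a, b} \ {a} : Finset V) = {b} := by grind
  have e2 : ({a, b} \ {b} : Finset V) = {a} := by grind
  have f1 : ({b} \ {a} : Finset V) = {b} := by grind
  have f2 : ({b} \ {a, b} : Finset V) = ∅ := by grind
  unfold mll
  rw [Finset.sum_powerset_insert (by simpa using hab), hb, Finset.sum_powerset_insert (by simp),
    Finset.sum_powerset_insert (by simp)]
  simp [e1, e2, f1, f2, Finset.card_pair hab]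
  ring

theorem mll_three (p : (∀ v, 𝔛 v) → ℝ) (a b c : V) (hab : a ≠ b) (hac : a ≠ c) (hbc : b ≠ c)
    (M : Finset V) (x : ∀ v, 𝔛 v) :
    mll p {a, b, c} M x = nu p {a, b, c} M x - nu p {a, b} M x - nu p {a, c} M x
      - nu p {b, c} M x + nu p {a} M x + nu p {b} M x + nu p {c} M x - nu p ∅ M x := by
  have hb : ({c} : Finset V) = insert c ∅ := rfl
  have e1 : ({a, b, c} \ {a} : Finset V) = {b, c} := by grind
  have e2 : ({a, b, c} \ {b} : Finset V) = {a, c} := by grind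
  have e3 : ({a, b, c} \ {c} : Finset V) = {a, b} := by grind
  have e4 : ({a, b, c} \ {a, b} : Finset V) = {c} := by grind
  have e5 : ({a, b, c} \ {a, c} : Finset V) = {b} := by grind
  have e6 : ({a, b, c} \ {b, c} : Finset V) = {a} := by grind
  have f1 : ({b, c} \ {a} : Finset V) = {b, c} := by grind
  have f2 : ({b, c} \ {a, c} : Finset V) = {b} := by grind
  have f3 : ({b, c} \ {a, b} : Finset V) = {c} := by grind
  have f4 : ({b, c} \ {a, b, c} : Finset V) = ∅ := by grind
  have e7 : ({a, b, c} : Finset V).card = 3 := Finset.card_eq_three.2 ⟨a, b, c, hab, hac, hbc, rfl⟩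
  unfold mll
  rw [Finset.sum_powerset_insert (by simp [hab, hac]), Finset.sum_powerset_insert (by simpa using hbc),
    Finset.sum_powerset_insert (by simpa using hbc), hb]
  repeat rw [Finset.sum_powerset_insert (by simp)]
  simp [e1, e2, e3, e4, e5, e6, e7, f1, f2, f3, f4, Finset.card_pair hab, Finset.card_pair hac,
    Finset.card_pair hbc]
  ring

theorem nu_of_indep (p : (∀ v, 𝔛 v) → ℝ) (hp : ∀ x, 0 < p x) (M : Finset V)
    (h : ∀ x, margin p M x = ∏ v ∈ M, margin p {v} x) :
    ∃ c : V → ℝ, (∀ v, c v = (∑ a, Real.log (margin p {v}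
        (Function.update (fun w => Classical.arbitrary (𝔛 w)) v a))) / Fintype.card (𝔛 v)) ∧
      ∀ L x, nu p L M x = ∑ v ∈ M, if v ∈ L then Real.log (margin p {v} x) else c v := by
  refine ⟨_, fun v => rfl, fun L x => ?_⟩
  have e : ∀ v (y : ∀ v, 𝔛 v), margin p {v} (Function.update
      (fun w => Classical.arbitrary (𝔛 w)) v (y v)) = margin p {v} y := by
    intro v y
    refine margin_congr p _ ?_
    simp
  have := avgOp_sum L M (fun v a => Real.log (margin p {v}
        (Function.update (fun w => Classical.arbitrary (𝔛 w)) v a))) x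
  simp only [e] at this
  rw [nu_eq, ← this]
  congr 1
  funext y
  rw [h, Real.log_prod]
  exact fun v _ => (margin_pos p hp _ _).ne'

theorem back (p : (∀ v, 𝔛 v) → ℝ) (hp : ∀ x, 0 < p x) (hsum : ∑ x, p x = 1)
    (a b c : V) (hab : a ≠ b) (hac : a ≠ c) (hbc : b ≠ c) (N M : Finset V)
    (hN : N = {a, b, c}) (hM : M = {b, c})
    (h : ∀ x, margin p N x = ∏ v ∈ N, margin p {v} x) :
    StrictlyCollapsible p N M {b} := by
  have hNM : N = insert a M := by rw [hN, hM]
  have haM : a ∉ M := by simp [hM, hab, hac]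
  have h' : ∀ x, margin p M x = ∏ v ∈ M, margin p {v} x := by
    intro x
    rw [margin_insert p a M haM, ← hNM]
    simp only [h]
    rw [hNM]
    simp only [Finset.prod_insert haM]
    have : ∀ t : 𝔛 a, ∏ v ∈ M, margin p {v} (Function.update x a t) =
        ∏ v ∈ M, margin p {v} x := by
      intro t
      refine Finset.prod_congr rfl fun v hv => margin_congr p _ ?_
      intro w hw
      rw [Finset.mem_singleton.1 hw, Function.update_of_ne (ne_of_mem_of_not_mem hv haM)]
    simp only [this]
    rw [← Finset.sum_mul]
    have h1 := margin_insert p a ∅ (by simp) x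
    rw [margin_empty p hsum] at h1
    have h2 : (insert a ∅ : Finset V) = {a} := rfl
    rw [h2] at h1
    rw [← h1, one_mul]
  obtain ⟨d, hd, hdN⟩ := nu_of_indep p hp N h
  obtain ⟨d', hd', hdM⟩ := nu_of_indep p hp M h'
  have hdd : d' = d := by funext v; rw [hd, hd']
  subst hdd
  constructor
  · intro x
    rw [mll_one, mll_one, hdN, hdN, hdM, hdM, hNM, Finset.sum_insert haM, Finset.sum_insert haM]
    simp [hab]
  · intro Z hZ hbZ hne x
    have hb : b ∈ Z := by simpa using hbZ.1
    have ha : a ∈ Z := by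
      obtain ⟨w, hw⟩ := hne
      have : w = a := by grind
      grind
    have hs : ∀ L, ∀ x, nu p L N x = (if a ∈ L then Real.log (margin p {a} x) else d' a) +
        ((if b ∈ L then Real.log (margin p {b} x) else d' b) +
        (if c ∈ L then Real.log (margin p {c} x) else d' c)) := by
      intro L x
      rw [hdN, hN, Finset.sum_insert (by simp [hab, hac]), Finset.sum_pair hbc]
    by_cases hc : c ∈ Z
    · have : Z = {a, b, c} := by grind
      rw [this, mll_three p a b c hab hac hbc]
      simp only [hs]
      simp [hab, hac, hbc, hab.symm, hac.symm, hbc.symm]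
      try ring
    · have : Z = {a, b} := by grind
      rw [this, mll_two p a b hab]
      simp only [hs]
      simp [hab, hac, hbc, hab.symm, hac.symm, hbc.symm]
      try ring

theorem StrictlyCollapsible.vanish {p : (∀ v, 𝔛 v) → ℝ} {N M Z : Finset V} {a : V}
    (h : StrictlyCollapsible p N M {a}) (w : V) (hZ : Z ⊆ N) (ha : a ∈ Z) (hw : w ∈ Z)
    (hM : w ∉ M) (hwa : w ≠ a) : ∀ x, mll p Z N x = 0 := by
  refine h.2 Z hZ ?_ ⟨w, by grind⟩
  rw [Finset.ssubset_iff_of_subset (by simpa using ha)]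
  exact ⟨w, hw, by simpa using hwa⟩

theorem forw (p : (∀ v, 𝔛 v) → ℝ) (hp : ∀ x, 0 < p x) (hsum : ∑ x, p x = 1)
    (i j k : V) (hij : i ≠ j) (hik : i ≠ k) (hjk : j ≠ k)
    (h1 : ∀ x, mll p {i, j} {i, j, k} x = 0) (h2 : ∀ x, mll p {i, k} {i, j, k} x = 0)
    (h3 : ∀ x, mll p {j, k} {i, j, k} x = 0) (h4 : ∀ x, mll p {i, j, k} {i, j, k} x = 0)
    (x : ∀ v, 𝔛 v) :
    margin p {i, j, k} x = margin p {i} x * margin p {j} x * margin p {k} x := by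
  obtain ⟨f, g, h, hf⟩ : ∃ (f : 𝔛 i → ℝ) (g : 𝔛 j → ℝ) (h : 𝔛 k → ℝ), ∀ y : ∀ v, 𝔛 v,
      margin p {i, j, k} y = f (y i) * g (y j) * h (y k) := by
    refine ⟨fun a => Real.exp (nu p {i} {i, j, k} (Function.update x i a)),
      fun a => Real.exp (nu p {j} {i, j, k} (Function.update x j a)),
      fun a => Real.exp (nu p {k} {i, j, k} (Function.update x k a) - 2 * nu p ∅ {i, j, k} x),
      fun y => ?_⟩
    have e : ∀ v, nu p {v} {i, j, k} (Function.update x v (y v)) = nu p {v} {i, j, k} y := by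
      intro v
      refine nu_congr p _ _ ?_
      simp
    have e0 : nu p ∅ {i, j, k} x = nu p ∅ {i, j, k} y := nu_congr p _ _ (by simp)
    simp only [e, e0]
    rw [← Real.exp_add, ← Real.exp_add, ← Real.exp_log (margin_pos p hp _ y), ← nu_self]
    congr 1
    have g1 := h1 y
    have g2 := h2 y
    have g3 := h3 y
    have g4 := h4 y
    rw [mll_two _ _ _ hij] at g1
    rw [mll_two _ _ _ hik] at g2
    rw [mll_two _ _ _ hjk] at g3
    rw [mll_three _ _ _ _ hij hik hjk] at g4
    linarith
  have mij : ∀ y, margin p {i, j} y = f (y i) * g (y j) * ∑ t, h t := by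
    intro y
    rw [margin_insert p k {i, j} (by simp [hik.symm, hjk.symm]),
      show (insert k {i, j} : Finset V) = {i, j, k} by grind]
    simp [hf, hij, hik, hjk, Finset.mul_sum]
  have mik : ∀ y, margin p {i, k} y = f (y i) * (∑ t, g t) * h (y k) := by
    intro y
    rw [margin_insert p j {i, k} (by simp [hij.symm, hjk]),
      show (insert j {i, k} : Finset V) = {i, j, k} by grind]
    simp [hf, hij, hik, hjk.symm, Finset.mul_sum, Finset.sum_mul]
  have mi : ∀ y, margin p {i} y = f (y i) * (∑ t, g t) * ∑ t, h t := by
    intro y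
    rw [margin_insert p j {i} (by simp [hij.symm]),
      show (insert j {i} : Finset V) = {i, j} by grind]
    simp only [mij, Function.update_self, Function.update_of_ne hij, Finset.mul_sum, Finset.sum_mul]
    exact Finset.sum_comm
  have mj : ∀ y, margin p {j} y = (∑ t, f t) * g (y j) * ∑ t, h t := by
    intro y
    rw [margin_insert p i {j} (by simp [hij])]
    simp [mij, hij.symm, Finset.sum_mul]
  have mk : ∀ y, margin p {k} y = (∑ t, f t) * (∑ t, g t) * h (y k) := by
    intro y
    rw [margin_insert p i {k} (by simp [hik])]
    simp only [mik, Function.update_self, Function.update_of_ne hik.symm, Finset.sum_mul]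
  have m0 : (∑ t, f t) * (∑ t, g t) * (∑ t, h t) = 1 := by
    rw [← margin_empty p hsum x, margin_insert p i ∅ (by simp),
      show (insert i ∅ : Finset V) = {i} from rfl]
    simp only [mi, Function.update_self, Finset.sum_mul]
  rw [hf, mi, mj, mk]
  linear_combination (-(f (x i) * g (x j) * h (x k)) * ((∑ t, f t) * (∑ t, g t) * (∑ t, h t) + 1)) * m0

theorem stmt16 (p : (∀ v, 𝔛 v) → ℝ) (hp : ∀ x, 0 < p x) (hsum : ∑ x, p x = 1)
    (i j k : V) (hij : i ≠ j) (hik : i ≠ k) (hjk : j ≠ k) :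
    (((StrictlyCollapsible p {i, j, k} {j, k} {j} ∧
       StrictlyCollapsible p {i, j, k} {j, k} {k}) ∧
      (StrictlyCollapsible p {i, j, k} {i, k} {i} ∧
       StrictlyCollapsible p {i, j, k} {i, k} {k})) ↔
     (∀ x : ∀ v, 𝔛 v,
       margin p {i, j, k} x = margin p {i} x * margin p {j} x * margin p {k} x)) ∧
    (((StrictlyCollapsible p {i, j, k} {j, k} {j} ∧
       StrictlyCollapsible p {i, j, k} {j, k} {k}) ∧
      (StrictlyCollapsible p {i, j, k} {i, j} {i} ∧
       StrictlyCollapsible p {i, j, k} {i, j} {j})) ↔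
     (∀ x : ∀ v, 𝔛 v,
       margin p {i, j, k} x = margin p {i} x * margin p {j} x * margin p {k} x)) ∧
    (((StrictlyCollapsible p {i, j, k} {i, k} {i} ∧
       StrictlyCollapsible p {i, j, k} {i, k} {k}) ∧
      (StrictlyCollapsible p {i, j, k} {i, j} {i} ∧
       StrictlyCollapsible p {i, j, k} {i, j} {j})) ↔
     (∀ x : ∀ v, 𝔛 v,
       margin p {i, j, k} x = margin p {i} x * margin p {j} x * margin p {k} x)) := by
  have hN3 : ∀ x, ∏ v ∈ ({i, j, k} : Finset V), margin p {v} x =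
      margin p {i} x * margin p {j} x * margin p {k} x := by
    intro x
    rw [Finset.prod_insert (by simp [hij, hik]), Finset.prod_pair hjk, mul_assoc]
  have B : (∀ x : ∀ v, 𝔛 v,
       margin p {i, j, k} x = margin p {i} x * margin p {j} x * margin p {k} x) →
      ∀ a b c : V, a ≠ b → a ≠ c → b ≠ c → ∀ M : Finset V, ({i, j, k} : Finset V) = {a, b, c} →
        M = {b, c} → StrictlyCollapsible p {i, j, k} M {b} := by
    intro h a b c hab hac hbc M hN hM
    exact back p hp hsum a b c hab hac hbc _ M hN hM (fun x => by rw [h x, hN3])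
  have F := forw p hp hsum i j k hij hik hjk
  refine ⟨⟨?_, fun h => ⟨⟨?_, ?_⟩, ?_, ?_⟩⟩, ⟨?_, fun h => ⟨⟨?_, ?_⟩, ?_, ?_⟩⟩,
    ⟨?_, fun h => ⟨⟨?_, ?_⟩, ?_, ?_⟩⟩⟩
  · rintro ⟨⟨s1, s2⟩, s3, s4⟩
    exact F (s1.vanish i (by grind) (by grind) (by grind) (by grind) (by grind))
      (s2.vanish i (by grind) (by grind) (by grind) (by grind) (by grind))
      (s4.vanish j (by grind) (by grind) (by grind) (by grind) (by grind))
      (s1.vanish i (by grind) (by grind) (by grind) (by grind) (by grind))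
  · exact B h i j k hij hik hjk _ (by grind) (by grind)
  · exact B h i k j hik hij hjk.symm _ (by grind) (by grind)
  · exact B h j i k hij.symm hjk hik _ (by grind) (by grind)
  · exact B h j k i hjk hij.symm hik.symm _ (by grind) (by grind)
  · rintro ⟨⟨s1, s2⟩, s3, s4⟩
    exact F (s1.vanish i (by grind) (by grind) (by grind) (by grind) (by grind))
      (s2.vanish i (by grind) (by grind) (by grind) (by grind) (by grind))
      (s4.vanish k (by grind) (by grind) (by grind) (by grind) (by grind))
      (s1.vanish i (by grind) (by grind) (by grind) (by grind) (by grind))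
  · exact B h i j k hij hik hjk _ (by grind) (by grind)
  · exact B h i k j hik hij hjk.symm _ (by grind) (by grind)
  · exact B h k i j hik.symm hjk.symm hij _ (by grind) (by grind)
  · exact B h k j i hjk.symm hik.symm hij.symm _ (by grind) (by grind)
  · rintro ⟨⟨s1, s2⟩, s3, s4⟩
    exact F (s1.vanish j (by grind) (by grind) (by grind) (by grind) (by grind))
      (s3.vanish k (by grind) (by grind) (by grind) (by grind) (by grind))
      (s2.vanish j (by grind) (by grind) (by grind) (by grind) (by grind))
      (s1.vanish j (by grind) (by grind) (by grind) (by grind) (by grind))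
  · exact B h j i k hij.symm hjk hik _ (by grind) (by grind)
  · exact B h j k i hjk hij.symm hik.symm _ (by grind) (by grind)
  · exact B h k i j hik.symm hjk.symm hij _ (by grind) (by grind)
  · exact B h k j i hjk.symm hik.symm hij.symm _ (by grind) (by grind)
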